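/- Let p be a prime with p ≡ 1 (mod 8), and let q be a prime with q ≡ 3 (mod 8) such that the Legendre symbol (p/q) equals −1. Then ℤ_(p) is equal to the set of rational numbers of the form 2(x₁₁ + x₁₂ + y₁₁ + y₁₂) where there exist rationals x_{ij}, y_{ij} (for i ∈ {1,2}, j ∈ {1,2,3,4}) satisfying f_{−2p,q}(x₁₁,x₁₂,x₁₃,x₁₄)² + f_{−2p,q}(x₂₁,x₂₂,x₂₃,x₂₄)² + f_{2p,q}(y₁₁,y₁₂,y₁₃,y₁₄)² + f_{2p,q}(y₂₁,y₂₂,y₂₃,y₂₄)² = 0. -/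

import Mathlib

/-- The polynomial `f_{a,b}(x₁,x₂,x₃,x₄) = x₁² − a·x₂² − b·x₃² + a·b·x₄² − 1`. -/
def fab (a b x₁ x₂ x₃ x₄ : ℚ) : ℚ :=
  x₁ ^ 2 - a * x₂ ^ 2 - b * x₃ ^ 2 + a * b * x₄ ^ 2 - 1

/-- `ℤ_(p)` : the set of rational numbers with nonnegative `p`-adic valuation,
i.e. whose denominator is not divisible by `p`, viewed as a subset of `ℚ`. -/
def Zloc (p : ℕ) : Set ℚ := {x : ℚ | ¬ (p ∣ x.den)}

/-!
In the quaternion algebra `(a, q)` over `ℚ`, with `a = ±2p`, the vanishing of `fab a q` says that a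
quaternion has reduced norm one. As `q` is not a square modulo `p` and `a` has odd valuation, the
`p`-adic absolute value of the reduced norm is a maximum of absolute values of the coordinates up to
scaling, so norm-one elements have `p`-integral coordinates and the algebra is anisotropic.

Conversely, `u = x² / N(x)` has norm one for every `x ≠ 0`, and `u.re + u.imI = 2t - 1` can be
achieved as soon as there is a `c ≠ 0` such that `c` is a norm from `ℚ(√a)` and `qc` is a norm from
`ℚ(√D)`, where `D = 1 - 4at(1 - t)`. By Legendre's theorem on ternary forms these conditions become
congruences, and a Dirichlet prime `l` solves them with `c = l` for `a = -2p` and `t = qe / 2^k`,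
and with `c = l / q` for `a = 2p` and `t = e / d`, where `d` is odd and prime to `p`. For `z` in
`ℤ_(p)`, the number `z / 4 + 1` is the sum of two such values of `t`, one for each sign of `a`.
-/

open scoped Quaternion NumberTheorySymbols

section QuadraticNorm

/-- `c` is a value of the binary form `x² - a y²`; over a field in which `a` is not a square, this
says that `c` is a norm from the quadratic extension generated by `√a`. -/
def IsQuadraticNorm {R : Type*} [CommRing R] (a c : R) : Prop :=
  ∃ x y, x ^ 2 - a * y ^ 2 = c

theorem IsQuadraticNorm.of_sq_mul {R : Type*} [CommRing R] {a c s : R}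
    (h : IsQuadraticNorm (s ^ 2 * a) c) : IsQuadraticNorm a c := by
  obtain ⟨x, y, rfl⟩ := h
  exact ⟨x, s * y, by ring⟩

variable {K : Type*} [Field K] {a c d : K}

theorem IsQuadraticNorm.div (hc : IsQuadraticNorm a c) (hd : IsQuadraticNorm a d) :
    IsQuadraticNorm a (c / d) := by
  obtain ⟨x, y, rfl⟩ := hc
  obtain ⟨z, w, hzw⟩ := hd
  refine ⟨(x * z - a * y * w) / d, (y * z - x * w) / d, ?_⟩
  obtain rfl | hd0 := eq_or_ne d 0
  · simp
  · field_simp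
    linear_combination (x ^ 2 - a * y ^ 2) * hzw

theorem isQuadraticNorm_of_isSquare [NeZero (2 : K)] (ha₀ : a ≠ 0) (ha : IsSquare a) (c : K) :
    IsQuadraticNorm a c := by
  obtain ⟨r, rfl⟩ := ha
  have hr : r ≠ 0 := left_ne_zero_of_mul ha₀
  have h2 : (2 : K) ≠ 0 := NeZero.ne 2
  exact ⟨(c + 1) / 2, (c - 1) / (2 * r), by field_simp; ring⟩

theorem eq_zero_of_sq_sub_mul_sq_eq_zero (ha : ¬ IsSquare a) {x y : K}
    (h : x ^ 2 - a * y ^ 2 = 0) : x = 0 ∧ y = 0 := by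
  have hy : y = 0 := by
    by_contra hy
    refine ha ⟨x / y, ?_⟩
    field_simp
    linear_combination -h
  exact ⟨by simpa [hy] using h, hy⟩

end QuadraticNorm

section Legendre

theorem exists_ne_zero_map_eq_zero_of_card_lt {ι G : Type*} [Fintype ι] [AddGroup G] [Finite G]
    (φ : (ι → ℤ) →+ G) (K : ι → ℕ) (h : Nat.card G < ∏ i, K i) :
    ∃ v, v ≠ 0 ∧ φ v = 0 ∧ ∀ i, |v i| < K i := by
  have := Fintype.ofFinite G
  classical
  obtain ⟨s, t, hne, heq⟩ := Fintype.exists_ne_map_eq_of_card_lt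
    (fun s : ∀ i, Fin (K i) ↦ φ fun i ↦ (s i : ℤ)) (by simpa [Nat.card_eq_fintype_card] using h)
  refine ⟨(fun i ↦ (s i : ℤ)) - fun i ↦ (t i : ℤ), fun hst ↦ hne ?_, ?_, fun i ↦ ?_⟩
  · ext i
    exact_mod_cast congrFun (sub_eq_zero.1 hst) i
  · rw [map_sub, sub_eq_zero]
    exact heq
  · simp only [Pi.sub_apply, abs_lt]
    have := (s i).2
    have := (t i).2
    lia

theorem sq_lt_of_abs_lt_ceil_sqrt {x : ℤ} {n : ℕ} (h : |x| < ⌈√(n : ℝ)⌉₊) : x ^ 2 < n := by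
  rw [Int.abs_eq_natAbs, Int.ofNat_lt, Nat.lt_ceil, Real.lt_sqrt (Nat.cast_nonneg _)] at h
  rw [← Int.natAbs_sq]
  exact_mod_cast h

theorem sqrt_lt_ceil_sqrt {n : ℕ} (hn : ¬ IsSquare n) : √(n : ℝ) < ⌈√(n : ℝ)⌉₊ := by
  refine (Nat.le_ceil _).lt_of_ne fun h ↦ hn ⟨⌈√(n : ℝ)⌉₊, ?_⟩
  have := Real.mul_self_sqrt n.cast_nonneg
  rw [h] at this
  exact_mod_cast this.symm

theorem mul_lt_ceil_sqrt_mul_ceil_sqrt_mul_ceil_sqrt {m n : ℕ} (hm : m ≠ 0) (hn : ¬ IsSquare n) :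
    m * n < ⌈√((m * n : ℕ) : ℝ)⌉₊ * ⌈√(n : ℝ)⌉₊ * ⌈√(m : ℝ)⌉₊ := by
  have hn₀ : n ≠ 0 := by
    rintro rfl
    exact hn (.zero)
  have hmn : (m * n : ℝ) = √((m * n : ℕ) : ℝ) * √n * √m := by
    rw [mul_assoc, mul_comm √(n : ℝ), ← Real.sqrt_mul m.cast_nonneg, Nat.cast_mul,
      Real.mul_self_sqrt (by positivity)]
  have : (m * n : ℝ) < ⌈√((m * n : ℕ) : ℝ)⌉₊ * ⌈√(n : ℝ)⌉₊ * ⌈√(m : ℝ)⌉₊ := by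
    rw [hmn]
    exact mul_lt_mul (mul_lt_mul' (Nat.le_ceil _) (sqrt_lt_ceil_sqrt hn) (by positivity)
      (by positivity)) (Nat.le_ceil _) (by positivity) (by positivity)
  exact_mod_cast this

theorem exists_small_mul_dvd_sq_sub_mul_sq_sub_mul_sq {a : ℤ} {b : ℕ} (ha₀ : a ≠ 0)
    (hb₀ : ¬ IsSquare b) (hab : IsCoprime a b) (ha : IsSquare (a : ZMod b))
    (hb : IsSquare (b : ZMod a.natAbs)) :
    ∃ x y z : ℤ, (x ≠ 0 ∨ y ≠ 0 ∨ z ≠ 0) ∧ a * b ∣ x ^ 2 - a * y ^ 2 - b * z ^ 2 ∧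
      x ^ 2 < |a| * b ∧ y ^ 2 < b ∧ z ^ 2 < |a| := by
  obtain ⟨α, hα⟩ := ha
  obtain ⟨β, hβ⟩ := hb
  have : NeZero a.natAbs := ⟨Int.natAbs_ne_zero.2 ha₀⟩
  have : NeZero b := ⟨by rintro rfl; exact hb₀ .zero⟩
  let φ : (Fin 3 → ℤ) →+ ZMod a.natAbs × ZMod b :=
    AddMonoidHom.mk' (fun v ↦ (v 0 - β * v 2, v 0 - α * v 1))
      fun v w ↦ by ext <;> simp <;> ring
  obtain ⟨v, hv₀, hφ, hv⟩ := exists_ne_zero_map_eq_zero_of_card_lt φ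
    ![⌈√((a.natAbs * b : ℕ) : ℝ)⌉₊, ⌈√(b : ℝ)⌉₊, ⌈√(a.natAbs : ℝ)⌉₊] (by
      simpa [Fin.prod_univ_three] using
        mul_lt_ceil_sqrt_mul_ceil_sqrt_mul_ceil_sqrt (Int.natAbs_ne_zero.2 ha₀) hb₀)
  obtain ⟨hβv, hαv⟩ := Prod.ext_iff.1 hφ
  simp only [φ, AddMonoidHom.mk'_apply, Prod.fst_zero, Prod.snd_zero] at hβv hαv
  have hax : a ∣ v 0 ^ 2 - a * v 1 ^ 2 - b * v 2 ^ 2 := by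
    have haa : (a : ZMod a.natAbs) = 0 := by simp [ZMod.intCast_zmod_eq_zero_iff_dvd]
    rw [← Int.natAbs_dvd, ← ZMod.intCast_zmod_eq_zero_iff_dvd]
    push_cast
    rw [haa, hβ]
    linear_combination (v 0 + β * v 2 : ZMod a.natAbs) * hβv
  have hbx : (b : ℤ) ∣ v 0 ^ 2 - a * v 1 ^ 2 - b * v 2 ^ 2 := by
    rw [← ZMod.intCast_zmod_eq_zero_iff_dvd]
    push_cast
    rw [hα, ZMod.natCast_self]
    linear_combination (v 0 + α * v 1 : ZMod b) * hαv
  refine ⟨v 0, v 1, v 2, ?_, hab.mul_dvd hax hbx, ?_, sq_lt_of_abs_lt_ceil_sqrt (hv 1), ?_⟩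
  · contrapose! hv₀
    ext i
    fin_cases i <;> simp [hv₀]
  · simpa using sq_lt_of_abs_lt_ceil_sqrt (hv 0)
  · simpa using sq_lt_of_abs_lt_ceil_sqrt (hv 2)

theorem sq_sub_mul_sq_eq_or_eq_of_mul_dvd {a b x y z : ℤ} (ha : a ≠ 0) (hb : 0 < b)
    (hdvd : a * b ∣ x ^ 2 - a * y ^ 2 - b * z ^ 2)
    (hx : x ^ 2 < |a| * b) (hy : y ^ 2 < b) (hz : z ^ 2 < |a|) :
    x ^ 2 - a * y ^ 2 = b * z ^ 2 ∨ x ^ 2 - a * y ^ 2 = b * (z ^ 2 - a) := by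
  obtain ⟨k, hk⟩ := hdvd
  have hpos : 0 < |a| * b := by positivity
  have hay : |a| * y ^ 2 < |a| * b := by gcongr
  have hbz : b * z ^ 2 < |a| * b := by rw [mul_comm]; gcongr
  have hay₀ : 0 ≤ |a| * y ^ 2 := by positivity
  have hbz₀ : 0 ≤ b * z ^ 2 := by positivity
  have hx₀ := sq_nonneg x
  suffices k = 0 ∨ k = -1 by
    rcases this with rfl | rfl
    · left; linear_combination hk
    · right; linear_combination hk
  rcases abs_choice a with h | h <;> rw [h] at hx hpos hay hbz hay₀
  · have : k < 1 := lt_of_mul_lt_mul_left (a := a * b) (by linarith) hpos.le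
    have : -2 < k := lt_of_mul_lt_mul_left (a := a * b) (by linarith) hpos.le
    lia
  · have : k < 1 := lt_of_mul_lt_mul_left (a := -a * b) (by linarith) hpos.le
    have : -2 < k := lt_of_mul_lt_mul_left (a := -a * b) (by linarith) hpos.le
    lia

theorem isQuadraticNorm_of_isSquare_zmod {a : ℤ} {b : ℕ} (hab : IsCoprime a b)
    (ha : IsSquare (a : ZMod b)) (hb : IsSquare (b : ZMod a.natAbs)) :
    IsQuadraticNorm (a : ℚ) b := by
  by_cases hb' : IsSquare b
  · obtain ⟨r, rfl⟩ := hb'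
    exact ⟨r, 0, by push_cast; ring⟩
  have hb₀ : b ≠ 0 := by rintro rfl; exact hb' .zero
  have ha₀ : a ≠ 0 := by
    rintro rfl
    rcases Int.isUnit_iff.1 (isCoprime_zero_left.1 hab) with h | h
    · exact hb' ((show b = 1 by lia) ▸ .one)
    · lia
  by_cases ha' : IsSquare (a : ℚ)
  · exact isQuadraticNorm_of_isSquare (mod_cast ha₀) ha' _
  obtain ⟨x, y, z, hne, hdvd, hx, hy, hz⟩ :=
    exists_small_mul_dvd_sq_sub_mul_sq_sub_mul_sq ha₀ hb' hab ha hb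
  obtain ⟨w, hw⟩ : ∃ w : ℤ, x ^ 2 - a * y ^ 2 = b * (z ^ 2 - a * w ^ 2) := by
    rcases sq_sub_mul_sq_eq_or_eq_of_mul_dvd ha₀ (by lia) hdvd hx hy hz with h | h
    · exact ⟨0, by simpa using h⟩
    · exact ⟨1, by simpa using h⟩
  have hw' : (x : ℚ) ^ 2 - a * y ^ 2 = b * (z ^ 2 - a * w ^ 2) := mod_cast hw
  have hd : (z : ℚ) ^ 2 - a * w ^ 2 ≠ 0 := by
    intro h
    have hz := (eq_zero_of_sq_sub_mul_sq_eq_zero ha' h).1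
    have hxy := eq_zero_of_sq_sub_mul_sq_eq_zero ha' (by rw [hw', h, mul_zero])
    norm_cast at hz hxy
    tauto
  rw [eq_div_of_mul_eq hd hw'.symm]
  exact .div ⟨x, y, rfl⟩ ⟨z, w, rfl⟩

theorem isQuadraticNorm_of_modEq_one {a : ℤ} {n : ℕ} (hn : n ≡ 1 [MOD a.natAbs])
    (ha : IsSquare (a : ZMod n)) : IsQuadraticNorm (a : ℚ) n := by
  refine isQuadraticNorm_of_isSquare_zmod ?_ ha ?_
  · rw [Int.isCoprime_iff_gcd_eq_one, Int.gcd, Int.natAbs_natCast, Nat.gcd_comm, hn.gcd_eq,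
      Nat.gcd_one_left]
  · rw [(ZMod.natCast_eq_natCast_iff _ _ _).2 hn]
    simp

end Legendre

section JacobiSymbol

theorem jacobiSym_eq_one_of_modEq_one {a : ℤ} {n : ℕ} (h : n ≡ 1 [MOD 4 * a.natAbs]) :
    jacobiSym a n = 1 := by
  have hn : Odd n := by
    have := h.of_mul_right a.natAbs
    rw [Nat.ModEq] at this
    grind
  have := jacobiSym.mod_right a hn
  rw [show n % (4 * a.natAbs) = 1 % (4 * a.natAbs) from h, ← jacobiSym.mod_right a odd_one] at this
  simpa using this

theorem isSquare_zmod_mul {m n : ℕ} (hmn : m.Coprime n) {a : ℤ} (hm : IsSquare (a : ZMod m))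
    (hn : IsSquare (a : ZMod n)) : IsSquare (a : ZMod (m * n)) := by
  obtain ⟨r, hr⟩ := hm
  obtain ⟨s, hs⟩ := hn
  have : IsSquare (a : ZMod m × ZMod n) := ⟨(r, s), by ext <;> simp [hr, hs]⟩
  simpa using this.map (ZMod.chineseRemainder hmn).symm

theorem exists_prime_gt_modEq_modEq {m n : ℕ} (hm : m ≠ 0) (hn : n ≠ 0) (hmn : m.Coprime n)
    {u v : ℕ} (hu : u.Coprime m) (hv : v.Coprime n) (N : ℕ) :
    ∃ l > N, l.Prime ∧ l ≡ u [MOD m] ∧ l ≡ v [MOD n] := by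
  obtain ⟨s, hsu, hsv⟩ := Nat.chineseRemainder hmn u v
  have hs : s.Coprime (m * n) :=
    .mul_right (hsu.gcd_eq.trans hu) (hsv.gcd_eq.trans hv)
  obtain ⟨l, hlN, hl, hls⟩ := Nat.forall_exists_prime_gt_and_modEq N (mul_ne_zero hm hn) hs
  exact ⟨l, hlN, hl, (hls.of_mul_right n).trans hsu, (hls.of_mul_left m).trans hsv⟩

theorem exists_prime_gt_mul_modEq_one_modEq {m n : ℕ} (hm : m ≠ 0) (hn : n ≠ 0)
    (hmn : m.Coprime n) {q v : ℕ} (hq : q.Coprime m) (hv : v.Coprime n) (N : ℕ) :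
    ∃ l > N, l.Prime ∧ q * l ≡ 1 [MOD m] ∧ l ≡ v [MOD n] := by
  have := NeZero.mk hm
  have hinv : q * (q⁻¹ : ZMod m).val ≡ 1 [MOD m] := by
    rw [← ZMod.natCast_eq_natCast_iff]
    simpa using ZMod.coe_mul_inv_eq_one q hq
  obtain ⟨l, hlN, hl, hlm, hln⟩ := exists_prime_gt_modEq_modEq hm hn hmn
    (Nat.coprime_of_mul_modEq_one q (by rwa [mul_comm])) hv N
  exact ⟨l, hlN, hl, (hlm.mul_left q).trans hinv, hln⟩

theorem jacobiSym_eq_one_of_isSquare_zmod {a : ℤ} {n : ℕ} (han : IsCoprime a n)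
    (ha : IsSquare (a : ZMod n)) : J(a | n) = 1 := by
  obtain ⟨r, hr⟩ := ha
  obtain ⟨r, rfl⟩ := ZMod.intCast_surjective r
  have har : a ≡ r ^ 2 [ZMOD n] := by
    rw [← ZMod.intCast_eq_intCast_iff, hr, Int.cast_pow, sq]
  have hrn : IsCoprime r n := by
    obtain ⟨k, hk⟩ := har.dvd
    rw [← IsCoprime.pow_left_iff two_pos, show r ^ 2 = a + n * k by lia]
    exact han.add_mul_left_left k
  rw [jacobiSym.mod_left' har, jacobiSym.sq_one' (Int.isCoprime_iff_gcd_eq_one.1 hrn)]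

theorem coprime_of_jacobiSym_ne_zero {a n : ℕ} (hn : n ≠ 0) (h : J(a | n) ≠ 0) : a.Coprime n := by
  by_contra han
  exact h (jacobiSym.eq_zero_iff.2 ⟨hn, by rwa [Int.gcd_natCast_natCast]⟩)

theorem jacobiSym_neg_two_mul {p n : ℕ} (hp : p % 4 = 1) (hn : n % 8 = 1 ∨ n % 8 = 3) :
    J(-2 * p | n) = J(n | p) := by
  rw [jacobiSym.mul_left, jacobiSym.at_neg_two (by grind), ZMod.χ₈'_nat_eq_if_mod_eight,
    jacobiSym.quadratic_reciprocity_one_mod_four hp (by grind)]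
  simp [hn, show n % 2 = 1 by lia]

theorem jacobiSym_two_mul {p n : ℕ} (hp : p % 4 = 1) (hn : n % 8 = 3 ∨ n % 8 = 5) :
    J(2 * p | n) = -J(n | p) := by
  rw [jacobiSym.mul_left, jacobiSym.at_two (by grind), ZMod.χ₈_nat_eq_if_mod_eight,
    jacobiSym.quadratic_reciprocity_one_mod_four hp (by grind)]
  simp [show n % 2 = 1 by lia, show ¬(n % 8 = 1 ∨ n % 8 = 7) by lia]

theorem coprime_eight_mul_natAbs {m : ℕ} {D : ℤ} (hm : Odd m) (hD : IsCoprime D m) :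
    m.Coprime (8 * D.natAbs) :=
  .mul_right (.pow_right 3 (Nat.coprime_two_right.2 hm))
    (by simpa using Int.isCoprime_iff_nat_coprime.1 hD.symm)

theorem exists_isQuadraticNorm_neg_two_mul {p q : ℕ} (hp : p % 4 = 1) (hq : q % 8 = 3) {D : ℤ}
    (hD₀ : D ≠ 0) (hDp : IsCoprime D p) (hDq : IsCoprime D q) (hD : IsSquare (D : ZMod q)) :
    ∃ c : ℚ, c ≠ 0 ∧ IsQuadraticNorm (-2 * p : ℚ) c ∧ IsQuadraticNorm (D : ℚ) (q * c) := by
  obtain ⟨l, hlq, hl, hql, hlp⟩ := exists_prime_gt_mul_modEq_one_modEq (by lia) (by lia)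
    (coprime_eight_mul_natAbs (by grind) hDp).symm (coprime_eight_mul_natAbs (by grind) hDq)
    (Nat.coprime_one_left p) q
  have := Fact.mk hl
  have hl8 : l % 8 = 3 := by
    have hql8 : q * l % 8 = 1 := hql.of_mul_right D.natAbs
    rw [Nat.mul_mod, hq] at hql8
    have three_inv : ∀ r < 8, 3 * r % 8 = 1 → r = 3 := by decide
    exact three_inv _ (Nat.mod_lt _ (by simp)) hql8
  have hpl : J(-2 * p | l) = 1 := by
    rw [jacobiSym_neg_two_mul hp (.inr hl8),
      jacobiSym.mod_left' (show (l : ℤ) % p = 1 % p by exact_mod_cast hlp), jacobiSym.one_left]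
  have hDl : J(D | l) = 1 := by
    have := jacobiSym_eq_one_of_modEq_one (a := D) (hql.of_dvd ⟨2, by ring⟩)
    rwa [jacobiSym.mul_right' D (by lia) hl.ne_zero, jacobiSym_eq_one_of_isSquare_zmod hDq hD,
      one_mul] at this
  refine ⟨l, mod_cast hl.ne_zero, ?_, ?_⟩
  · have hl2p : l ≡ 1 [MOD (-2 * p : ℤ).natAbs] := by
      rw [Int.natAbs_mul]
      exact (Nat.modEq_and_modEq_iff_modEq_mul (Nat.coprime_two_left.2 (by grind))).1
        ⟨show l % 2 = 1 by lia, hlp⟩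
    exact_mod_cast isQuadraticNorm_of_modEq_one hl2p (ZMod.isSquare_of_jacobiSym_eq_one hpl)
  · have hDql : IsSquare (D : ZMod (q * l)) :=
      isSquare_zmod_mul (Nat.coprime_of_lt_prime (by lia) hlq hl).symm hD
        (ZMod.isSquare_of_jacobiSym_eq_one hDl)
    exact_mod_cast isQuadraticNorm_of_modEq_one (hql.of_dvd ⟨8, by ring⟩) hDql

theorem isQuadraticNorm_two_mul_of_modEq {p q l : ℕ} [Fact q.Prime] [Fact l.Prime]
    (hp : p % 4 = 1) (hq : q % 8 = 3) (hl : l % 8 = 5) (hlp : l ≡ q [MOD p])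
    (hqp : J(q | p) = -1) : IsQuadraticNorm (2 * p : ℚ) (q * l) := by
  have hlp' : J(l | p) = -1 := by
    rw [jacobiSym.mod_left' (show (l : ℤ) % p = q % p by exact_mod_cast hlp), hqp]
  have hql : q.Coprime l := (Nat.coprime_primes Fact.out Fact.out).2 (by rintro rfl; lia)
  have hpql : IsSquare ((2 * p : ℤ) : ZMod (q * l)) :=
    isSquare_zmod_mul hql
      (ZMod.isSquare_of_jacobiSym_eq_one (by rw [jacobiSym_two_mul hp (.inl hq), hqp, neg_neg]))
      (ZMod.isSquare_of_jacobiSym_eq_one (by rw [jacobiSym_two_mul hp (.inr hl), hlp', neg_neg]))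
  have hqlp : q * l ≡ q ^ 2 [MOD 2 * p] := by
    refine (Nat.modEq_and_modEq_iff_modEq_mul (Nat.coprime_two_left.2 (by grind))).1 ⟨?_, ?_⟩
    · simp [Nat.ModEq, Nat.mul_mod, Nat.pow_mod, show q % 2 = 1 by lia, show l % 2 = 1 by lia]
    · rw [sq]
      exact hlp.mul_left q
  have hcop : (q * l).Coprime (2 * p) :=
    .mul_right (Nat.coprime_two_right.2 (.mul (by grind) (by grind)))
      (.mul_left (coprime_of_jacobiSym_ne_zero (by lia) (by lia))
        (coprime_of_jacobiSym_ne_zero (by lia) (by lia)))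
  have hsq : IsSquare ((q * l : ℕ) : ZMod (2 * p : ℤ).natAbs) := by
    have : (2 * p : ℤ).natAbs = 2 * p := by lia
    rw [this, (ZMod.natCast_eq_natCast_iff _ _ _).2 hqlp]
    exact ⟨q, by push_cast; ring⟩
  exact_mod_cast isQuadraticNorm_of_isSquare_zmod (a := 2 * p)
    (mod_cast Nat.isCoprime_iff_coprime.2 hcop.symm) hpql hsq

theorem exists_isQuadraticNorm_two_mul {p q : ℕ} [Fact q.Prime] (hp : p % 4 = 1) (hq : q % 8 = 3)
    (hqp : J(q | p) = -1) {D : ℤ} (hD : Odd D) (hDp : IsCoprime D p) :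
    ∃ c : ℚ, c ≠ 0 ∧ IsQuadraticNorm (2 * p : ℚ) c ∧ IsQuadraticNorm (D : ℚ) (q * c) := by
  have hqp_cop : q.Coprime p := coprime_of_jacobiSym_ne_zero (by lia) (by lia)
  have hu : (1 + 4 * D.natAbs).Coprime (8 * D.natAbs) :=
    .mul_right (.pow_right 3 (Nat.coprime_two_right.2 (by grind))) (by simp)
  obtain ⟨l, -, hl, hlu, hlp⟩ := exists_prime_gt_modEq_modEq (by grind) (by lia)
    (coprime_eight_mul_natAbs (by grind) hDp).symm hu hqp_cop 0
  have := Fact.mk hl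
  have hl8 : l % 8 = 5 := by
    have : l % 8 = _ := hlu.of_mul_right D.natAbs
    grind
  have hlD : l ≡ 1 [MOD 4 * D.natAbs] :=
    (hlu.of_dvd ⟨2, by ring⟩).trans (by simp [Nat.ModEq])
  have hDl : IsSquare (D : ZMod l) :=
    ZMod.isSquare_of_jacobiSym_eq_one (jacobiSym_eq_one_of_modEq_one hlD)
  have hq₀ : (q : ℚ) ≠ 0 := mod_cast (Fact.out : q.Prime).ne_zero
  refine ⟨l / q, div_ne_zero (mod_cast hl.ne_zero) hq₀, ?_, ?_⟩
  · rw [show (l / q : ℚ) = q * l / q ^ 2 by field_simp]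
    exact (isQuadraticNorm_two_mul_of_modEq hp hq hl8 hlp hqp).div ⟨q, 0, by ring⟩
  · rw [mul_div_cancel₀ _ hq₀]
    exact isQuadraticNorm_of_modEq_one (hlD.of_dvd ⟨4, by ring⟩) hDl

end JacobiSymbol

section ReducedNorm

variable {R : Type*} [CommRing R] {a b : R}

/-- The reduced norm of the quaternion algebra with `i² = a` and `j² = b`. -/
def reducedNorm (x : ℍ[R,a,b]) : R :=
  x.re ^ 2 - a * x.imI ^ 2 - b * x.imJ ^ 2 + a * b * x.imK ^ 2

theorem reducedNorm_mul (x y : ℍ[R,a,b]) :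
    reducedNorm (x * y) = reducedNorm x * reducedNorm y := by
  simp only [reducedNorm, QuaternionAlgebra.re_mul, QuaternionAlgebra.imI_mul,
    QuaternionAlgebra.imJ_mul, QuaternionAlgebra.imK_mul]
  ring

theorem reducedNorm_smul (r : R) (x : ℍ[R,a,b]) :
    reducedNorm (r • x) = r ^ 2 * reducedNorm x := by
  simp only [reducedNorm, QuaternionAlgebra.re_smul, QuaternionAlgebra.imI_smul,
    QuaternionAlgebra.imJ_smul, QuaternionAlgebra.imK_smul, smul_eq_mul]
  ring

variable {K : Type*} [Field K] {a b : K}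

theorem exists_reducedNorm_eq_one_of_reducedNorm_ne_zero {x : ℍ[K,a,b]} (hx : reducedNorm x ≠ 0) :
    ∃ u : ℍ[K,a,b], reducedNorm u = 1 ∧
      u.re + u.imI = 2 * (x.re * (x.re + x.imI) / reducedNorm x) - 1 := by
  refine ⟨(reducedNorm x)⁻¹ • x ^ 2, ?_, ?_⟩
  · rw [reducedNorm_smul, sq x, reducedNorm_mul]
    field_simp
  · simp only [sq x, QuaternionAlgebra.re_smul, QuaternionAlgebra.re_mul,
      QuaternionAlgebra.imI_smul, QuaternionAlgebra.imI_mul, smul_eq_mul]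
    field_simp
    simp only [reducedNorm]
    ring

theorem exists_reducedNorm_eq_one [NeZero (2 : K)]
    (haniso : ∀ x : ℍ[K,a,b], reducedNorm x = 0 → x = 0) {c t : K} (hc : c ≠ 0)
    (hac : IsQuadraticNorm a c) (hbc : IsQuadraticNorm (1 - 4 * a * (t * (1 - t))) (b * c)) :
    ∃ u : ℍ[K,a,b], reducedNorm u = 1 ∧ u.re + u.imI = 2 * t - 1 := by
  obtain ⟨S, T, hST⟩ := hac
  obtain ⟨X, Y, hXY⟩ := hbc
  have h2 : (2 : K) ≠ 0 := NeZero.ne 2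
  have ha : a ≠ 0 := by
    rintro rfl
    have := haniso ⟨0, 1, 0, 0⟩ (by simp [reducedNorm])
    simp [QuaternionAlgebra.ext_iff] at this
  -- With `x.re = t * Y`, the equation `reducedNorm x = Y * (x.re + x.imI)` is quadratic in `x.imI`,
  -- and its discriminant is `X ^ 2`.
  let x : ℍ[K,a,b] := ⟨t * Y, -(X + Y) / (2 * a), T / 2, S / (2 * a)⟩
  have hx : x ≠ 0 := by
    intro hx
    have hT : T = 0 := by simpa [x, h2] using congrArg QuaternionAlgebra.imJ hx
    have hS : S = 0 := by simpa [x, h2, ha] using congrArg QuaternionAlgebra.imK hx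
    exact hc (by rw [← hST, hS, hT]; ring)
  have hN : reducedNorm x ≠ 0 := fun h ↦ hx (haniso x h)
  have hNx : reducedNorm x = Y * (t * Y - (X + Y) / (2 * a)) := by
    simp only [x, reducedNorm]
    field_simp
    linear_combination b * hST - hXY
  have ht : x.re * (x.re + x.imI) = t * reducedNorm x := by
    rw [hNx]
    ring
  obtain ⟨u, hu, hut⟩ := exists_reducedNorm_eq_one_of_reducedNorm_ne_zero hN
  exact ⟨u, hu, by rw [hut, ht, mul_div_cancel_right₀ _ hN]⟩

end ReducedNorm

section PadicNorm

variable {p : ℕ} [Fact p.Prime]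

theorem norm_sq_sub_mul_sq {d : ℤ_[p]} (hd : ¬ IsSquare (PadicInt.toZMod d)) (x y : ℚ_[p]) :
    ‖x ^ 2 - d * y ^ 2‖ = max ‖x‖ ‖y‖ ^ 2 := by
  have norm_eq_one {z : ℤ_[p]} (hz : PadicInt.toZMod z ≠ 0) : ‖(z : ℚ_[p])‖ = 1 := by
    by_contra h
    refine hz ?_
    rw [← RingHom.mem_ker, PadicInt.ker_toZMod, IsLocalRing.mem_maximalIdeal, mem_nonunits_iff]
    rwa [PadicInt.isUnit_iff]
  have hd₁ : ‖(d : ℚ_[p])‖ = 1 := norm_eq_one fun h ↦ hd (h ▸ .zero)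
  by_cases hxy : ‖x‖ = ‖y‖
  · obtain rfl | hy := eq_or_ne y 0
    · simp
    let t : ℤ_[p] := ⟨x / y, by simp [hxy, hy]⟩
    have ht : ‖((t ^ 2 - d : ℤ_[p]) : ℚ_[p])‖ = 1 := norm_eq_one fun h ↦
      hd ⟨PadicInt.toZMod t, by
        rw [map_sub, map_pow] at h
        linear_combination -h⟩
    have hxt : x ^ 2 - d * y ^ 2 = (t ^ 2 - d : ℤ_[p]) * y ^ 2 := by
      push_cast
      change _ = ((x / y) ^ 2 - (d : ℚ_[p])) * y ^ 2
      field_simp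
    rw [hxt, norm_mul, ht, one_mul, norm_pow, hxy, max_self]
  · have hne : ‖x ^ 2‖ ≠ ‖-(d * y ^ 2)‖ := by
      simpa [hd₁, sq_eq_sq₀] using hxy
    rw [sub_eq_add_neg, Padic.add_eq_max_of_ne hne, norm_neg, norm_mul, hd₁, one_mul, norm_pow,
      norm_pow]
    exact ((pow_left_monotoneOn (n := 2)).map_max (norm_nonneg x) (norm_nonneg y)).symm

theorem eq_zero_of_norm_sq_eq_norm_mul_norm_sq {a : ℚ_[p]} (ha : Odd a.valuation) {x y : ℚ_[p]}
    (h : ‖x‖ ^ 2 = ‖a‖ * ‖y‖ ^ 2) : x = 0 ∧ y = 0 := by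
  have ha₀ : a ≠ 0 := by
    rintro rfl
    simp at ha
  by_contra hxy
  have hx : x ≠ 0 := by rintro rfl; simp_all
  have hy : y ≠ 0 := by rintro rfl; simp_all
  have hp : (1 : ℝ) < p := mod_cast (Fact.out : p.Prime).one_lt
  have hval : (x ^ 2).valuation = (a * y ^ 2).valuation := by
    have hnorm : ‖x ^ 2‖ = ‖a * y ^ 2‖ := by simpa using h
    rw [Padic.norm_eq_zpow_neg_valuation (by positivity),
      Padic.norm_eq_zpow_neg_valuation (by positivity)] at hnorm
    exact neg_injective (zpow_right_injective₀ (by positivity) hp.ne' hnorm)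
  rw [Padic.valuation_mul ha₀ (by positivity), Padic.valuation_pow, Padic.valuation_pow] at hval
  grind

theorem norm_reducedNorm {a : ℚ_[p]} (ha : Odd a.valuation) {b : ℤ_[p]}
    (hb : ¬ IsSquare (PadicInt.toZMod b)) (x : ℍ[ℚ_[p],a,(b : ℚ_[p])]) :
    ‖reducedNorm x‖ = max (max ‖x.re‖ ‖x.imJ‖ ^ 2) (‖a‖ * max ‖x.imI‖ ‖x.imK‖ ^ 2) := by
  obtain ⟨y, hy⟩ : ∃ y : ℚ_[p], ‖y‖ = max ‖x.re‖ ‖x.imJ‖ := by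
    rcases max_choice ‖x.re‖ ‖x.imJ‖ with h | h <;> exact ⟨_, h.symm⟩
  obtain ⟨z, hz⟩ : ∃ z : ℚ_[p], ‖z‖ = max ‖x.imI‖ ‖x.imK‖ := by
    rcases max_choice ‖x.imI‖ ‖x.imK‖ with h | h <;> exact ⟨_, h.symm⟩
  have hre := norm_sq_sub_mul_sq hb x.re x.imJ
  have him : ‖-(a * (x.imI ^ 2 - b * x.imK ^ 2))‖ = ‖a‖ * max ‖x.imI‖ ‖x.imK‖ ^ 2 := by
    rw [norm_neg, norm_mul, norm_sq_sub_mul_sq hb]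
  have hN : reducedNorm x =
      x.re ^ 2 - b * x.imJ ^ 2 + -(a * (x.imI ^ 2 - b * x.imK ^ 2)) := by
    rw [reducedNorm]
    ring
  rw [← hy] at hre ⊢
  rw [← hz] at him ⊢
  rw [hN]
  by_cases h : ‖y‖ ^ 2 = ‖a‖ * ‖z‖ ^ 2
  · obtain ⟨rfl, rfl⟩ := eq_zero_of_norm_sq_eq_norm_mul_norm_sq ha h
    have h0 : ‖(0 : ℚ_[p])‖ ^ 2 = 0 := by simp
    rw [h0] at hre
    rw [h0, mul_zero] at him
    rw [norm_eq_zero.1 hre, norm_eq_zero.1 him, h0, mul_zero, max_self, add_zero, norm_zero]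
  · rw [Padic.add_eq_max_of_ne (by rwa [hre, him]), hre, him]

theorem norm_reducedNorm_ratCast {a : ℚ} (ha : Odd (padicValRat p a)) {q : ℕ}
    (hq : ¬ IsSquare (q : ZMod p)) (x : ℍ[ℚ,a,(q : ℚ)]) :
    ‖((reducedNorm x : ℚ) : ℚ_[p])‖ = max (max ‖(x.re : ℚ_[p])‖ ‖(x.imJ : ℚ_[p])‖ ^ 2)
      (‖(a : ℚ_[p])‖ * max ‖(x.imI : ℚ_[p])‖ ‖(x.imK : ℚ_[p])‖ ^ 2) := by
  have := norm_reducedNorm (a := (a : ℚ_[p])) (b := (q : ℤ_[p]))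
    (by rwa [Padic.valuation_ratCast]) (by simpa using hq) ⟨x.re, x.imI, x.imJ, x.imK⟩
  rw [← this]
  simp [reducedNorm]

theorem eq_zero_of_reducedNorm_eq_zero {a : ℚ} (ha : Odd (padicValRat p a)) {q : ℕ}
    (hq : ¬ IsSquare (q : ZMod p)) {x : ℍ[ℚ,a,(q : ℚ)]} (hx : reducedNorm x = 0) : x = 0 := by
  have hN := norm_reducedNorm_ratCast ha hq x
  rw [hx, Rat.cast_zero, norm_zero] at hN
  have ha₀ : 0 < ‖(a : ℚ_[p])‖ := by
    rw [norm_pos_iff, Rat.cast_ne_zero]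
    rintro rfl
    simp at ha
  have eq_zero {u v : ℚ} (h : max ‖(u : ℚ_[p])‖ ‖(v : ℚ_[p])‖ ^ 2 ≤ 0) : u = 0 ∧ v = 0 := by
    have hmax := ((pow_eq_zero_iff two_ne_zero).1 (h.antisymm (sq_nonneg _))).le
    simpa only [max_le_iff, norm_le_zero_iff, Rat.cast_eq_zero] using hmax
  obtain ⟨hre, himJ⟩ := eq_zero ((le_max_left _ _).trans hN.ge)
  obtain ⟨himI, himK⟩ := eq_zero
    (nonpos_of_mul_nonpos_right ((le_max_right _ _).trans hN.ge) ha₀)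
  ext <;> assumption

theorem mem_Zloc_iff_norm_le_one {x : ℚ} : x ∈ Zloc p ↔ ‖(x : ℚ_[p])‖ ≤ 1 := by
  rw [Padic.norm_rat_le_one_iff_padicValuation_le_one, Rat.padicValuation_le_one_iff]
  rfl

theorem Zloc_eq_coe_subring : Zloc p = ((PadicInt.subring p).comap (Rat.castHom ℚ_[p])) := by
  ext x
  exact mem_Zloc_iff_norm_le_one

theorem one_mem_Zloc : 1 ∈ Zloc p := by
  rw [Zloc_eq_coe_subring]
  exact one_mem _

theorem div_four_add_one_mem_Zloc (hp : p ≠ 2) {z : ℚ} (hz : z ∈ Zloc p) :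
    z / 4 + 1 ∈ Zloc p := by
  have h4 : (1 / 4 : ℚ) ∈ Zloc p := by
    have hden : (1 / 4 : ℚ).den = 2 ^ 2 := by norm_num
    exact fun h ↦ hp ((Nat.prime_dvd_prime_iff_eq Fact.out Nat.prime_two).1
      ((Fact.out : p.Prime).dvd_of_dvd_pow (hden ▸ h)))
  rw [Zloc_eq_coe_subring] at hz h4 ⊢
  rw [div_eq_mul_one_div]
  exact add_mem (mul_mem hz h4) (one_mem _)

theorem re_add_imI_mem_Zloc {a : ℚ} (ha : padicValRat p a = 1) {q : ℕ}
    (hq : ¬ IsSquare (q : ZMod p)) {x : ℍ[ℚ,a,(q : ℚ)]} (hx : reducedNorm x ∈ Zloc p) :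
    x.re + x.imI ∈ Zloc p := by
  have hN := norm_reducedNorm_ratCast (ha ▸ odd_one) hq x
  have hN1 := mem_Zloc_iff_norm_le_one.1 hx
  have ha₀ : a ≠ 0 := by
    rintro rfl
    simp at ha
  have hanorm : ‖(a : ℚ_[p])‖ = (p : ℝ)⁻¹ := by
    rw [Padic.norm_eq_zpow_neg_valuation (by simpa), Padic.valuation_ratCast, ha, zpow_neg_one]
  have hp : (1 : ℝ) < p := mod_cast (Fact.out : p.Prime).one_lt
  have hre : ‖(x.re : ℚ_[p])‖ ≤ 1 := by
    rw [← sq_le_one_iff₀ (norm_nonneg _)]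
    calc ‖(x.re : ℚ_[p])‖ ^ 2 ≤ max ‖(x.re : ℚ_[p])‖ ‖(x.imJ : ℚ_[p])‖ ^ 2 := by
          gcongr; exact le_max_left _ _
      _ ≤ 1 := ((le_max_left _ _).trans hN.ge).trans hN1
  have himI : ‖(x.imI : ℚ_[p])‖ ^ 2 < (p : ℝ) ^ 2 := by
    calc ‖(x.imI : ℚ_[p])‖ ^ 2 ≤ max ‖(x.imI : ℚ_[p])‖ ‖(x.imK : ℚ_[p])‖ ^ 2 := by
          gcongr; exact le_max_left _ _
      _ ≤ (p : ℝ) := by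
          have := ((le_max_right _ _).trans hN.ge).trans hN1
          rwa [hanorm, inv_mul_le_iff₀ (by positivity), mul_one] at this
      _ < (p : ℝ) ^ 2 := lt_self_pow₀ hp one_lt_two
  have himI1 : ‖(x.imI : ℚ_[p])‖ ≤ 1 := by
    have := (Padic.norm_le_pow_iff_norm_lt_pow_add_one (x.imI : ℚ_[p]) 0).2
      (by simpa using lt_of_pow_lt_pow_left₀ 2 (by positivity) himI)
    simpa using this
  rw [Zloc_eq_coe_subring]
  exact add_mem hre himI1

end PadicNorm

theorem padicValRat_two_mul_self {p : ℕ} [Fact p.Prime] (hp : p ≠ 2) :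
    padicValRat p (2 * p) = 1 := by
  have hp₀ : (p : ℚ) ≠ 0 := mod_cast (Fact.out : p.Prime).ne_zero
  have h2 : padicValNat p 2 = 0 :=
    padicValNat.eq_zero_of_not_dvd fun h ↦
      hp ((Nat.prime_dvd_prime_iff_eq Fact.out Nat.prime_two).1 h)
  have h2' : padicValRat p 2 = 0 := by exact_mod_cast h2
  rw [padicValRat.mul two_ne_zero hp₀, h2', padicValRat.self (Fact.out : p.Prime).one_lt, zero_add]

theorem exists_eq_mul_div_two_pow_add_div {q : ℕ} (hq : Odd q) (x : ℚ) :
    ∃ (k : ℕ) (e e' : ℤ) (d : ℕ), Odd d ∧ d ∣ x.den ∧ x = q * e / 2 ^ k + e' / d := by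
  obtain ⟨k, d, hd, hden⟩ := Nat.exists_eq_two_pow_mul_odd x.den_nz
  obtain ⟨u, v, huv⟩ : IsCoprime ((q * d : ℕ) : ℤ) (2 ^ k : ℕ) :=
    Nat.isCoprime_iff_coprime.2 (.pow_right k (Nat.coprime_two_right.2 (hq.mul hd)))
  have huv' : (u * (q * d) + v * 2 ^ k : ℚ) = 1 := mod_cast huv
  have hd₀ : (d : ℚ) ≠ 0 := mod_cast hd.pos.ne'
  refine ⟨k, u * x.num, v * x.num, d, hd, hden ▸ dvd_mul_left _ _, ?_⟩
  calc x = x.num / (2 ^ k * d) := by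
        conv_lhs => rw [← x.num_div_den, hden]
        push_cast
        rfl
    _ = _ := by
        push_cast
        field_simp
        linear_combination -x.num * huv'

section NormOne

variable {p q : ℕ} [Fact p.Prime]

theorem exists_reducedNorm_eq_one_of_div {a : ℚ} (ha : Odd (padicValRat p a))
    (hq : ¬ IsSquare (q : ZMod p)) {c e f : ℚ} (hf : f ≠ 0) (hc : c ≠ 0)
    (hac : IsQuadraticNorm a c)
    (hqc : IsQuadraticNorm (f ^ 2 - 4 * a * (e * (f - e))) (q * c)) :
    ∃ u : ℍ[ℚ,a,(q : ℚ)], reducedNorm u = 1 ∧ u.re + u.imI = 2 * (e / f) - 1 := by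
  have hD : f ^ 2 - 4 * a * (e * (f - e)) = f ^ 2 * (1 - 4 * a * (e / f * (1 - e / f))) := by
    field_simp
  exact exists_reducedNorm_eq_one (fun x ↦ eq_zero_of_reducedNorm_eq_zero ha hq) hc hac
    (hD ▸ hqc).of_sq_mul

theorem exists_reducedNorm_neg_two_mul_eq_one (hp : p % 4 = 1) (hq : q % 8 = 3)
    (hqp : J(q | p) = -1) (e : ℤ) (k : ℕ) :
    ∃ u : ℍ[ℚ,-2 * (p : ℚ),(q : ℚ)], reducedNorm u = 1 ∧
      u.re + u.imI = 2 * (q * e / 2 ^ k : ℚ) - 1 := by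
  set D : ℤ := (2 ^ k) ^ 2 - 4 * (-2 * p) * (q * e * (2 ^ k - q * e)) with hD
  have hcop {n : ℕ} (hn : Odd n) (m : ℤ) : IsCoprime ((2 ^ k) ^ 2 + n * m : ℤ) n :=
    .add_mul_left_left (.pow_left (.pow_left
      (Nat.isCoprime_iff_coprime.2 (Nat.coprime_two_left.2 hn)))) m
  have hDp : IsCoprime D p := by
    convert hcop (show Odd p by grind) (8 * (q * e * (2 ^ k - q * e))) using 1
    ring
  have hDq : IsCoprime D q := by
    convert hcop (show Odd q by grind) (8 * p * (e * (2 ^ k - q * e))) using 1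
    ring
  have hDsq : IsSquare (D : ZMod q) := ⟨2 ^ k, by simp [hD]; ring⟩
  have hD₀ : D ≠ 0 := by
    intro h
    rw [h, isCoprime_zero_left, Int.isUnit_iff] at hDp
    have := (Fact.out : p.Prime).one_lt
    lia
  obtain ⟨c, hc, hac, hqc⟩ := exists_isQuadraticNorm_neg_two_mul hp hq hD₀ hDp hDq hDsq
  have hval : Odd (padicValRat p (-2 * p)) := by
    rw [neg_mul, padicValRat.neg, padicValRat_two_mul_self (by lia)]
    exact odd_one
  push_cast [hD] at hqc
  exact exists_reducedNorm_eq_one_of_div hval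
    (mod_cast ZMod.nonsquare_of_jacobiSym_eq_neg_one hqp) (pow_ne_zero k two_ne_zero) hc hac hqc

theorem exists_reducedNorm_two_mul_eq_one [Fact q.Prime] (hp : p % 4 = 1) (hq : q % 8 = 3)
    (hqp : J(q | p) = -1) (e : ℤ) {d : ℕ} (hd : Odd d) (hdp : d.Coprime p) :
    ∃ u : ℍ[ℚ,2 * (p : ℚ),(q : ℚ)], reducedNorm u = 1 ∧
      u.re + u.imI = 2 * (e / d : ℚ) - 1 := by
  set D : ℤ := d ^ 2 - 4 * (2 * p) * (e * (d - e)) with hD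
  have hDp : IsCoprime D p := by
    rw [show D = d ^ 2 + p * (-8 * (e * (d - e))) by rw [hD]; ring]
    exact .add_mul_left_left (.pow_left (Nat.isCoprime_iff_coprime.2 hdp)) _
  have hDodd : Odd D := by
    have : Odd ((d : ℤ) ^ 2) := .pow (mod_cast hd)
    exact this.sub_even ⟨4 * p * (e * (d - e)), by ring⟩
  obtain ⟨c, hc, hac, hqc⟩ := exists_isQuadraticNorm_two_mul hp hq hqp hDodd hDp
  have hval : Odd (padicValRat p (2 * p)) := by
    rw [padicValRat_two_mul_self (by lia)]
    exact odd_one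
  push_cast [hD] at hqc
  exact exists_reducedNorm_eq_one_of_div hval
    (mod_cast ZMod.nonsquare_of_jacobiSym_eq_neg_one hqp) (mod_cast hd.pos.ne') hc hac hqc

end NormOne

theorem fab_eq_zero_iff {a b : ℚ} (x : ℍ[ℚ,a,b]) :
    fab a b x.re x.imI x.imJ x.imK = 0 ↔ reducedNorm x = 1 :=
  sub_eq_zero

theorem sum_four_sq_eq_zero_iff {R : Type*} [Ring R] [LinearOrder R] [IsStrictOrderedRing R]
    {a b c d : R} : a ^ 2 + b ^ 2 + c ^ 2 + d ^ 2 = 0 ↔ a = 0 ∧ b = 0 ∧ c = 0 ∧ d = 0 := by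
  rw [add_eq_zero_iff_of_nonneg (by positivity) (by positivity),
    add_eq_zero_iff_of_nonneg (by positivity) (by positivity),
    add_eq_zero_iff_of_nonneg (by positivity) (by positivity)]
  simp [and_assoc]

theorem mem_Zloc_iff_exists_reducedNorm_eq_one {p q : ℕ} [Fact p.Prime] [Fact q.Prime]
    (hp : p % 4 = 1) (hq : q % 8 = 3) (hqp : J(q | p) = -1) {z : ℚ} :
    z ∈ Zloc p ↔ ∃ (u : ℍ[ℚ,-2 * (p : ℚ),(q : ℚ)]) (v : ℍ[ℚ,2 * (p : ℚ),(q : ℚ)]),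
      reducedNorm u = 1 ∧ reducedNorm v = 1 ∧ z = 2 * (u.re + u.imI + (v.re + v.imI)) := by
  have hp2 : p ≠ 2 := by lia
  have hqsq : ¬ IsSquare (q : ZMod p) := mod_cast ZMod.nonsquare_of_jacobiSym_eq_neg_one hqp
  constructor
  · intro hz
    obtain ⟨k, e, e', d, hd, hdden, hsum⟩ :=
      exists_eq_mul_div_two_pow_add_div (q := q) (by grind) (z / 4 + 1)
    have hdp : d.Coprime p := .symm <| (Fact.out : p.Prime).coprime_iff_not_dvd.2
      fun h ↦ div_four_add_one_mem_Zloc hp2 hz (h.trans hdden)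
    obtain ⟨u, hu, hu'⟩ := exists_reducedNorm_neg_two_mul_eq_one hp hq hqp e k
    obtain ⟨v, hv, hv'⟩ := exists_reducedNorm_two_mul_eq_one hp hq hqp e' hd hdp
    refine ⟨u, v, hu, hv, ?_⟩
    rw [hu', hv']
    linear_combination 4 * hsum
  · rintro ⟨u, v, hu, hv, rfl⟩
    have hval := padicValRat_two_mul_self hp2
    have hval' : padicValRat p (-2 * p) = 1 := by rw [neg_mul, padicValRat.neg, hval]
    have hu' := re_add_imI_mem_Zloc hval' hqsq (hu ▸ one_mem_Zloc)
    have hv' := re_add_imI_mem_Zloc hval hqsq (hv ▸ one_mem_Zloc)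
    rw [Zloc_eq_coe_subring] at hu' hv' ⊢
    exact mul_mem (ofNat_mem _ 2) (add_mem hu' hv')

theorem stmt18_general (p q : ℕ) (hp : p.Prime) (hmodp : p % 4 = 1)
    [Fact q.Prime] (hmodq : q % 8 = 3) (hleg : legendreSym q (p : ℤ) = -1) :
    Zloc p =
      {z : ℚ | ∃ x₁₁ x₁₂ x₁₃ x₁₄ x₂₁ x₂₂ x₂₃ x₂₄
          y₁₁ y₁₂ y₁₃ y₁₄ y₂₁ y₂₂ y₂₃ y₂₄ : ℚ,
        z = 2 * (x₁₁ + x₁₂ + y₁₁ + y₁₂) ∧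
        fab (-2 * (p : ℚ)) (q : ℚ) x₁₁ x₁₂ x₁₃ x₁₄ ^ 2 +
          fab (-2 * (p : ℚ)) (q : ℚ) x₂₁ x₂₂ x₂₃ x₂₄ ^ 2 +
          fab (2 * (p : ℚ)) (q : ℚ) y₁₁ y₁₂ y₁₃ y₁₄ ^ 2 +
          fab (2 * (p : ℚ)) (q : ℚ) y₂₁ y₂₂ y₂₃ y₂₄ ^ 2 = 0} := by
  have := Fact.mk hp
  have hqp : J(q | p) = -1 := by
    rw [← jacobiSym.quadratic_reciprocity_one_mod_four hmodp (by grind),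
      ← jacobiSym.legendreSym.to_jacobiSym, hleg]
  ext z
  rw [mem_Zloc_iff_exists_reducedNorm_eq_one hmodp hmodq hqp, Set.mem_ofPred_eq]
  constructor
  · rintro ⟨u, v, hu, hv, rfl⟩
    refine ⟨u.re, u.imI, u.imJ, u.imK, 1, 0, 0, 0, v.re, v.imI, v.imJ, v.imK, 1, 0, 0, 0,
      by ring, ?_⟩
    rw [sum_four_sq_eq_zero_iff, fab_eq_zero_iff u, fab_eq_zero_iff v]
    exact ⟨hu, by simp [fab], hv, by simp [fab]⟩
  · rintro ⟨x₁, x₂, x₃, x₄, _, _, _, _, y₁, y₂, y₃, y₄, _, _, _, _, rfl, h⟩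
    obtain ⟨hx, -, hy, -⟩ := sum_four_sq_eq_zero_iff.1 h
    exact ⟨⟨x₁, x₂, x₃, x₄⟩, ⟨y₁, y₂, y₃, y₄⟩, (fab_eq_zero_iff _).1 hx, (fab_eq_zero_iff _).1 hy,
      by ring⟩

/-- For a prime `p ≡ 1 (mod 8)` and a prime `q ≡ 3 (mod 8)`
with Legendre symbol `(p/q) = −1`, `ℤ_(p)` equals the set of rationals of the
form `2(x₁₁ + x₁₂ + y₁₁ + y₁₂)` where
`f₍₋₂p,q₎(x₁ⱼ)² + f₍₋₂p,q₎(x₂ⱼ)² + f₍₂p,q₎(y₁ⱼ)² + f₍₂p,q₎(y₂ⱼ)² = 0`. -/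
theorem stmt18 (p q : ℕ) (hp : p.Prime) (hmodp : p % 8 = 1)
    [Fact q.Prime] (hmodq : q % 8 = 3) (hleg : legendreSym q (p : ℤ) = -1) :
    Zloc p =
      {z : ℚ | ∃ x₁₁ x₁₂ x₁₃ x₁₄ x₂₁ x₂₂ x₂₃ x₂₄
          y₁₁ y₁₂ y₁₃ y₁₄ y₂₁ y₂₂ y₂₃ y₂₄ : ℚ,
        z = 2 * (x₁₁ + x₁₂ + y₁₁ + y₁₂) ∧
        fab (-2 * (p : ℚ)) (q : ℚ) x₁₁ x₁₂ x₁₃ x₁₄ ^ 2 +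
          fab (-2 * (p : ℚ)) (q : ℚ) x₂₁ x₂₂ x₂₃ x₂₄ ^ 2 +
          fab (2 * (p : ℚ)) (q : ℚ) y₁₁ y₁₂ y₁₃ y₁₄ ^ 2 +
          fab (2 * (p : ℚ)) (q : ℚ) y₂₁ y₂₂ y₂₃ y₂₄ ^ 2 = 0} :=
  stmt18_general p q hp (by lia) hmodq hleg
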